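/- Let D_Y > 0, suppose some channel in ℛ_Y(D_Y;Y) attains the minimal induced task distortion D_T^min = min 𝒟*_T(D_Y;Y), and suppose that for every channel k ∈ ℛ_Y(D_Y;Y) with E[d_T(h(Y), h(Ŷ))] = D_T^min there exist two points ŷ₁ ≠ ŷ₂ with nonzero marginal probabilities P(Ŷ = ŷ₁) > 0 and P(Ŷ = ŷ₂) > 0, identical task output h(ŷ₁) = h(ŷ₂), and at least one y with P(Y = y | Ŷ = ŷ₁) ≠ P(Y = y | Ŷ = ŷ₂). Then the minimal achievable rate of the supervised approach is strictly lower than that of distilling the intermediate layer directly: R_Y(D_T^min;T) < R_Y(D_Y;Y). -/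

import Mathlib

open scoped BigOperators

/-- Joint distribution P(a,b) = p(a)·k(a)(b) induced by a source `p` and a channel `k`,
as a real number. -/
noncomputable def jointP {A B : Type*} [Fintype A] [Fintype B] (p : PMF A) (k : A → PMF B)
    (a : A) (b : B) : ℝ :=
  (p a * k a b).toReal

/-- Marginal distribution of the second coordinate of the joint induced by `(p, k)`. -/
noncomputable def margSnd {A B : Type*} [Fintype A] [Fintype B] (p : PMF A) (k : A → PMF B)
    (b : B) : ℝ :=
  ∑ a, jointP p k a b

/-- Mutual information I(A;B) = ∑_{a,b} P(a,b)·log(P(a,b)/(P(a)·P(b))) of the joint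
induced by `(p, k)`; the convention 0·log 0 = 0 holds automatically in Lean. -/
noncomputable def mutualInfo {A B : Type*} [Fintype A] [Fintype B] (p : PMF A)
    (k : A → PMF B) : ℝ :=
  ∑ a, ∑ b, jointP p k a b * Real.log (jointP p k a b / ((p a).toReal * margSnd p k b))

/-- Expected distortion E[d(A,B)] under the joint induced by `(p, k)`. -/
noncomputable def expDist {A B : Type*} [Fintype A] [Fintype B] (p : PMF A) (k : A → PMF B)
    (d : A → B → ℝ) : ℝ :=
  ∑ a, ∑ b, jointP p k a b * d a b

/-- Rate-distortion function: infimum of mutual information over all channels `A → PMF B`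
meeting the expected-distortion constraint `≤ D`. -/
noncomputable def rate {A B : Type*} [Fintype A] [Fintype B] (p : PMF A) (d : A → B → ℝ)
    (D : ℝ) : ℝ :=
  sInf { r : ℝ | ∃ k : A → PMF B, expDist p k d ≤ D ∧ r = mutualInfo p k }

/-- Conditional probability P(A = a | B = b) under the joint induced by `(p, k)`. -/
noncomputable def condProb {A B : Type*} [Fintype A] [Fintype B] (p : PMF A) (k : A → PMF B)
    (a : A) (b : B) : ℝ :=
  jointP p k a b / margSnd p k b

/-!
Relabelling the output of a channel by a map `φ` coarsens the joint distribution, so by the log-sum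
inequality it cannot increase mutual information, and it decreases it strictly once `φ` identifies
two outputs of positive probability with different posteriors. If a distortion does not distinguish
two outputs `b₁` and `b₂`, then sending `b₂` to `b₁` leaves the expected distortion unchanged.
Applied to a Y-optimal channel attaining the minimal task distortion, this gives a channel with the
same task distortion and a rate strictly below `R_Y(D_Y;Y)`.
-/

section LogSum

variable {ι : Type*} {s : Finset ι} {x y : ι → ℝ}

theorem sum_div_sum_mul_div_mul (hxy : ∀ i ∈ s, y i = 0 → x i = 0) (c : ι → ℝ) :
    ∑ i ∈ s, y i / (∑ j ∈ s, y j) * (x i / y i * c i) = (∑ i ∈ s, x i * c i) / ∑ j ∈ s, y j := by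
  rw [Finset.sum_div]
  refine Finset.sum_congr rfl fun i hi => ?_
  rcases eq_or_ne (y i) 0 with hyi | hyi
  · simp [hyi, hxy i hi hyi]
  · field_simp

theorem sum_div_sum_mul_div (hxy : ∀ i ∈ s, y i = 0 → x i = 0) :
    ∑ i ∈ s, y i / (∑ j ∈ s, y j) * (x i / y i) = (∑ i ∈ s, x i) / ∑ j ∈ s, y j := by
  simpa only [mul_one] using sum_div_sum_mul_div_mul hxy fun _ => 1

theorem sum_mul_log_sum_div_sum_le (hx : ∀ i ∈ s, 0 ≤ x i) (hy : ∀ i ∈ s, 0 ≤ y i)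
    (hxy : ∀ i ∈ s, y i = 0 → x i = 0) :
    (∑ i ∈ s, x i) * Real.log ((∑ i ∈ s, x i) / ∑ i ∈ s, y i) ≤
      ∑ i ∈ s, x i * Real.log (x i / y i) := by
  rcases (Finset.sum_nonneg hy).eq_or_lt with hY | hY
  · have hx0 : ∀ i ∈ s, x i = 0 := fun i hi =>
      hxy i hi ((Finset.sum_eq_zero_iff_of_nonneg hy).1 hY.symm i hi)
    rw [Finset.sum_eq_zero hx0, zero_mul, Finset.sum_eq_zero fun i hi => by rw [hx0 i hi, zero_mul]]
  · have jensen := Real.convexOn_mul_log.map_sum_le (t := s) (w := fun i => y i / ∑ j ∈ s, y j)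
      (p := fun i => x i / y i) (fun i hi => div_nonneg (hy i hi) hY.le)
      (by rw [← Finset.sum_div, div_self hY.ne']) fun i hi => div_nonneg (hx i hi) (hy i hi)
    simp only [smul_eq_mul] at jensen
    rwa [sum_div_sum_mul_div hxy, sum_div_sum_mul_div_mul hxy, div_mul_eq_mul_div,
      div_le_div_iff_of_pos_right hY] at jensen

theorem sum_mul_log_sum_div_sum_lt (hx : ∀ i ∈ s, 0 ≤ x i) (hy : ∀ i ∈ s, 0 ≤ y i)
    (hxy : ∀ i ∈ s, y i = 0 → x i = 0)
    (hne : ∃ i ∈ s, ∃ j ∈ s, y i ≠ 0 ∧ y j ≠ 0 ∧ x i / y i ≠ x j / y j) :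
    (∑ i ∈ s, x i) * Real.log ((∑ i ∈ s, x i) / ∑ i ∈ s, y i) <
      ∑ i ∈ s, x i * Real.log (x i / y i) := by
  obtain ⟨i, hi, j, hj, hyi, hyj, hij⟩ := hne
  have hY : 0 < ∑ l ∈ s, y l := Finset.sum_pos' hy ⟨i, hi, (hy i hi).lt_of_ne' hyi⟩
  have jensen := (Real.strictConvexOn_mul_log.map_sum_lt_iff_of_nonneg (t := s)
    (w := fun l => y l / ∑ j ∈ s, y j) (p := fun l => x l / y l)
    (fun l hl => div_nonneg (hy l hl) hY.le) (by rw [← Finset.sum_div, div_self hY.ne'])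
    fun l hl => div_nonneg (hx l hl) (hy l hl)).2
    ⟨i, hi, j, hj, div_ne_zero hyi hY.ne', div_ne_zero hyj hY.ne', hij⟩
  simp only [smul_eq_mul] at jensen
  rwa [sum_div_sum_mul_div hxy, sum_div_sum_mul_div_mul hxy, div_mul_eq_mul_div,
    div_lt_div_iff_of_pos_right hY] at jensen

end LogSum

section Channel

variable {A B C : Type*} [Fintype A] [Fintype B] [Fintype C] (p : PMF A) (k : A → PMF B)

theorem sum_toReal_pmf : ∑ a, (p a).toReal = 1 := by
  rw [← ENNReal.toReal_sum fun a _ => p.apply_ne_top a, ← tsum_fintype (L := .unconditional A),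
    p.tsum_coe, ENNReal.toReal_one]

theorem jointP_nonneg (a : A) (b : B) : 0 ≤ jointP p k a b :=
  ENNReal.toReal_nonneg

theorem margSnd_nonneg (b : B) : 0 ≤ margSnd p k b :=
  Finset.sum_nonneg fun a _ => jointP_nonneg p k a b

theorem sum_jointP (a : A) : ∑ b, jointP p k a b = (p a).toReal := by
  simp only [jointP, ENNReal.toReal_mul, ← Finset.mul_sum, sum_toReal_pmf, mul_one]

theorem sum_margSnd : ∑ b, margSnd p k b = 1 := by
  simp only [margSnd]
  rw [Finset.sum_comm]
  simp only [sum_jointP, sum_toReal_pmf]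

theorem mul_margSnd_nonneg (a : A) (b : B) : 0 ≤ (p a).toReal * margSnd p k b :=
  mul_nonneg ENNReal.toReal_nonneg (margSnd_nonneg p k b)

variable {p k}

theorem jointP_eq_zero_of_source {a : A} (ha : (p a).toReal = 0) (b : B) :
    jointP p k a b = 0 := by
  rw [jointP, ENNReal.toReal_mul, ha, zero_mul]

theorem jointP_eq_zero_of_margSnd {b : B} (hb : margSnd p k b = 0) (a : A) :
    jointP p k a b = 0 :=
  (Finset.sum_eq_zero_iff_of_nonneg fun a _ => jointP_nonneg p k a b).1 hb a (Finset.mem_univ a)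

theorem jointP_eq_zero_of_mul_margSnd {a : A} {b : B} (h : (p a).toReal * margSnd p k b = 0) :
    jointP p k a b = 0 :=
  (mul_eq_zero.1 h).elim (jointP_eq_zero_of_source · b) (jointP_eq_zero_of_margSnd · a)

variable (p k)

theorem mutualInfo_nonneg : 0 ≤ mutualInfo p k := by
  have logSum := sum_mul_log_sum_div_sum_le (s := Finset.univ)
    (x := fun ab : A × B => jointP p k ab.1 ab.2)
    (y := fun ab : A × B => (p ab.1).toReal * margSnd p k ab.2)
    (fun ab _ => jointP_nonneg p k ab.1 ab.2) (fun ab _ => mul_margSnd_nonneg p k ab.1 ab.2)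
    fun _ _ => jointP_eq_zero_of_mul_margSnd
  simpa only [mutualInfo, Fintype.sum_prod_type, sum_jointP, ← Finset.mul_sum, sum_margSnd, mul_one,
    sum_toReal_pmf, div_one, Real.log_one, mul_zero] using logSum

variable {p k} in
theorem rate_le_mutualInfo {d : A → B → ℝ} {D : ℝ} (hk : expDist p k d ≤ D) :
    rate p d D ≤ mutualInfo p k :=
  csInf_le ⟨0, by rintro _ ⟨k', -, rfl⟩; exact mutualInfo_nonneg p k'⟩ ⟨k, hk, rfl⟩

/-- The channel `k` followed by the deterministic relabelling `φ` of its output, used to merge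
reconstruction points. -/
noncomputable def mapOutput (k : A → PMF B) (φ : B → C) : A → PMF C :=
  fun a => (k a).map φ

theorem jointP_mapOutput [DecidableEq C] (φ : B → C) (a : A) (c : C) :
    jointP p (mapOutput k φ) a c = ∑ b with φ b = c, jointP p k a b := by
  have hmap : (k a).map φ c = ∑ b with φ b = c, k a b := by
    simp only [PMF.map_apply, tsum_fintype, Finset.sum_filter, @eq_comm _ c]
  simp only [jointP, mapOutput, hmap, ENNReal.toReal_mul]
  rw [ENNReal.toReal_sum fun b _ => (k a).apply_ne_top b, Finset.mul_sum]

theorem margSnd_mapOutput [DecidableEq C] (φ : B → C) (c : C) :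
    margSnd p (mapOutput k φ) c = ∑ b with φ b = c, margSnd p k b := by
  simp only [margSnd, jointP_mapOutput]
  exact Finset.sum_comm

theorem expDist_mapOutput (φ : B → C) (d : A → C → ℝ) :
    expDist p (mapOutput k φ) d = expDist p k fun a b => d a (φ b) := by
  classical
  refine Finset.sum_congr rfl fun a _ => ?_
  rw [← Finset.sum_fiberwise _ φ]
  refine Finset.sum_congr rfl fun c _ => ?_
  rw [jointP_mapOutput, Finset.sum_mul]
  exact Finset.sum_congr rfl fun b hb => by simp only [(Finset.mem_filter.1 hb).2]

variable {p k}

theorem source_ne_zero_of_condProb_ne {a : A} {b₁ b₂ : B}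
    (hpost : condProb p k a b₁ ≠ condProb p k a b₂) : (p a).toReal ≠ 0 := fun ha =>
  hpost <| by simp only [condProb, jointP_eq_zero_of_source ha, zero_div]

theorem mutualInfo_mapOutput_lt {φ : B → C} {b₁ b₂ : B} (hφ : φ b₁ = φ b₂)
    (h₁ : 0 < margSnd p k b₁) (h₂ : 0 < margSnd p k b₂) {a₀ : A}
    (hpost : condProb p k a₀ b₁ ≠ condProb p k a₀ b₂) :
    mutualInfo p (mapOutput k φ) < mutualInfo p k := by
  classical
  let info (a : A) (b : B) : ℝ :=
    jointP p k a b * Real.log (jointP p k a b / ((p a).toReal * margSnd p k b))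
  let mergedInfo (a : A) (c : C) : ℝ := (∑ b with φ b = c, jointP p k a b) *
    Real.log ((∑ b with φ b = c, jointP p k a b) / ∑ b with φ b = c, (p a).toReal * margSnd p k b)
  have mergedInfo_le (a : A) (c : C) : mergedInfo a c ≤ ∑ b with φ b = c, info a b :=
    sum_mul_log_sum_div_sum_le (fun b _ => jointP_nonneg p k a b)
      (fun b _ => mul_margSnd_nonneg p k a b) fun _ _ => jointP_eq_zero_of_mul_margSnd
  have mergedInfo_lt : mergedInfo a₀ (φ b₁) < ∑ b with φ b = φ b₁, info a₀ b := by
    have ha₀ : (p a₀).toReal ≠ 0 := source_ne_zero_of_condProb_ne hpost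
    refine sum_mul_log_sum_div_sum_lt (fun b _ => jointP_nonneg p k a₀ b)
      (fun b _ => mul_margSnd_nonneg p k a₀ b) (fun _ _ => jointP_eq_zero_of_mul_margSnd)
      ⟨b₁, by simp, b₂, by simp [hφ], mul_ne_zero ha₀ h₁.ne', mul_ne_zero ha₀ h₂.ne', ?_⟩
    rw [mul_comm, ← div_div, mul_comm, ← div_div]
    exact (div_left_inj' ha₀).not.2 hpost
  calc mutualInfo p (mapOutput k φ)
    _ = ∑ a, ∑ c, mergedInfo a c := by
      simp only [mutualInfo, jointP_mapOutput, margSnd_mapOutput, Finset.mul_sum, mergedInfo]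
    _ < ∑ a, ∑ c, ∑ b with φ b = c, info a b :=
      Finset.sum_lt_sum (fun a _ => Finset.sum_le_sum fun c _ => mergedInfo_le a c)
        ⟨a₀, Finset.mem_univ a₀, Finset.sum_lt_sum (fun c _ => mergedInfo_le a₀ c)
          ⟨φ b₁, Finset.mem_univ _, mergedInfo_lt⟩⟩
    _ = mutualInfo p k := Finset.sum_congr rfl fun a _ => Finset.sum_fiberwise _ φ (info a)

theorem supervised_lt_intermediate_rd_general {d : A → B → ℝ} {b₁ b₂ : B}
    (hd : ∀ a, d a b₁ = d a b₂) (h₁ : 0 < margSnd p k b₁) (h₂ : 0 < margSnd p k b₂) {a₀ : A}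
    (hpost : condProb p k a₀ b₁ ≠ condProb p k a₀ b₂) :
    rate p d (expDist p k d) < mutualInfo p k := by
  classical
  let φ : B → B := Function.update id b₂ b₁
  have hφ : φ b₁ = φ b₂ := by simp [φ, Function.update_apply]
  have hdφ (a : A) (b : B) : d a (φ b) = d a b := by
    rcases eq_or_ne b b₂ with rfl | hb
    · simp only [φ, Function.update_self, hd]
    · simp only [φ, Function.update_of_ne hb, id]
  have hdist : expDist p (mapOutput k φ) d = expDist p k d := by
    simp only [expDist_mapOutput, hdφ]
  exact (rate_le_mutualInfo hdist.le).trans_lt (mutualInfo_mapOutput_lt hφ h₁ h₂ hpost)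

end Channel

/-- If some Y-optimal channel attains D_T^min = min 𝒟*_T(D_Y;Y), and every
Y-optimal channel attaining D_T^min has two distinct reconstruction points of positive
marginal probability with identical task output but differing posteriors, then
R_Y(D_T^min;T) < R_Y(D_Y;Y). Here Y = g(X). -/
theorem supervised_lt_intermediate_rd
    {𝒳 𝒴 𝒯 : Type*} [Fintype 𝒳] [Fintype 𝒴] [Fintype 𝒯]
    [Nonempty 𝒳] [Nonempty 𝒴] [Nonempty 𝒯]
    (pX : PMF 𝒳) (g : 𝒳 → 𝒴) (h : 𝒴 → 𝒯)
    (dT : 𝒯 → 𝒯 → ℝ) (hdT : ∀ t t', 0 ≤ dT t t')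
    (dY : 𝒴 → 𝒴 → ℝ) (hdY : ∀ y y', 0 ≤ dY y y')
    (DY : ℝ) (hDY : 0 < DY)
    (kstar : 𝒴 → PMF 𝒴)
    (hk_dist : expDist (pX.map g) kstar dY ≤ DY)
    (hk_rate : mutualInfo (pX.map g) kstar = rate (pX.map g) dY DY)
    (DTmin : ℝ)
    (hattain : DTmin = expDist (pX.map g) kstar (fun y yhat => dT (h y) (h yhat)))
    (hmin : ∀ k : 𝒴 → PMF 𝒴, expDist (pX.map g) k dY ≤ DY →
      mutualInfo (pX.map g) k = rate (pX.map g) dY DY →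
      DTmin ≤ expDist (pX.map g) k (fun y yhat => dT (h y) (h yhat)))
    (hmerge : ∀ k : 𝒴 → PMF 𝒴, expDist (pX.map g) k dY ≤ DY →
      mutualInfo (pX.map g) k = rate (pX.map g) dY DY →
      expDist (pX.map g) k (fun y yhat => dT (h y) (h yhat)) = DTmin →
      ∃ yhat₁ yhat₂ : 𝒴, yhat₁ ≠ yhat₂ ∧
        0 < margSnd (pX.map g) k yhat₁ ∧ 0 < margSnd (pX.map g) k yhat₂ ∧
        h yhat₁ = h yhat₂ ∧
        ∃ y : 𝒴, condProb (pX.map g) k y yhat₁ ≠ condProb (pX.map g) k y yhat₂) :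
    rate (pX.map g) (fun y yhat => dT (h y) (h yhat)) DTmin
      < rate (pX.map g) dY DY := by
  obtain ⟨y₁, y₂, -, h₁, h₂, hh, y, hpost⟩ := hmerge kstar hk_dist hk_rate hattain.symm
  rw [← hk_rate, hattain]
  exact supervised_lt_intermediate_rd_general (fun _ => by rw [hh]) h₁ h₂ hpost
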